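/- Let s > 1, let r, q ∈ [1,∞] with r ≤ q, let ω and θ be s-admissible weights on ℝ^d with ω(ξ) ≤ C·θ(ξ) for all ξ and some constant C > 0, let f ∈ L¹(ℝ^d) have compact support, and let φ be an s-cutoff. Then WF_{FL^q_ω}(φf) ⊆ WF_{FL^r_θ}(f). -/

import Mathlib

open MeasureTheory Complex Set
open scoped ENNReal RealInnerProductSpace NNReal

noncomputable section

namespace Paper

variable {d : ℕ}

/-- The Fourier transform, normalized by `(2π)^{-d/2}`. -/
def FT (f : EuclideanSpace ℝ (Fin d) → ℂ) (ξ : EuclideanSpace ℝ (Fin d)) : ℂ :=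
  ((2 * Real.pi) ^ (-(d : ℝ) / 2) : ℝ) *
    ∫ x, f x * Complex.exp (-(⟪x, ξ⟫ : ℝ) * Complex.I)

/-- The short-time Fourier transform `V_φ f (x, ξ)`. -/
def STFT (φ f : EuclideanSpace ℝ (Fin d) → ℂ) (x ξ : EuclideanSpace ℝ (Fin d)) : ℂ :=
  ((2 * Real.pi) ^ (-(d : ℝ) / 2) : ℝ) *
    ∫ y, f y * (starRingEnd ℂ) (φ (y - x)) * Complex.exp (-(⟪ξ, y⟫ : ℝ) * Complex.I)

/-- A cone in `ℝ^d ∖ {0}`. -/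
def IsCone (Γ : Set (EuclideanSpace ℝ (Fin d))) : Prop :=
  (0 : EuclideanSpace ℝ (Fin d)) ∉ Γ ∧ ∀ ξ ∈ Γ, ∀ t : ℝ, 0 < t → t • ξ ∈ Γ

/-- An `s`-cutoff: smooth, compactly supported, with Fourier transform decaying faster
than every `exp (-N |ξ|^{1/s})`. -/
def IsSCutoff (s : ℝ) (φ : EuclideanSpace ℝ (Fin d) → ℂ) : Prop :=
  ContDiff ℝ (⊤ : ℕ∞) φ ∧ HasCompactSupport φ ∧
    ∀ N : ℝ, 0 < N → ∃ C : ℝ, 0 < C ∧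
      ∀ ξ, ‖FT φ ξ‖ ≤ C * Real.exp (-N * ‖ξ‖ ^ (1 / s))

/-- An `s`-admissible weight: positive, measurable, and moderate with respect to an even
submultiplicative weight of sub-exponential growth of order `1/s`. -/
def IsSAdmissible (s : ℝ) (ω : EuclideanSpace ℝ (Fin d) → ℝ) : Prop :=
  Measurable ω ∧ (∀ x, 0 < ω x) ∧
    ∃ v : EuclideanSpace ℝ (Fin d) → ℝ, Measurable v ∧ (∀ x, 0 < v x) ∧
      (∀ x, v (-x) = v x) ∧ (∀ x y, v (x + y) ≤ v x * v y) ∧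
      ∃ C₀ k₀ C₁ : ℝ, 0 < C₀ ∧ 0 < k₀ ∧ 0 < C₁ ∧
        (∀ ξ, v ξ ≤ C₀ * Real.exp (k₀ * ‖ξ‖ ^ (1 / s))) ∧
        ∀ x y, ω (x + y) ≤ C₁ * v x * ω y

/-- The Fourier–Lebesgue seminorm `( ∫_Γ (|f̂| ω)^q )^{1/q}` (ess-sup when `q = ∞`). -/
def FLSemi (ω : EuclideanSpace ℝ (Fin d) → ℝ) (q : ℝ≥0∞)
    (f : EuclideanSpace ℝ (Fin d) → ℂ) (Γ : Set (EuclideanSpace ℝ (Fin d))) : ℝ≥0∞ :=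
  eLpNorm (fun ξ => ‖FT f ξ‖ * ω ξ) q (volume.restrict Γ)

/-- The Fourier–Lebesgue wave-front set `WF_{FL^q_ω} f`. -/
def WF_FL (s : ℝ) (q : ℝ≥0∞) (ω : EuclideanSpace ℝ (Fin d) → ℝ)
    (f : EuclideanSpace ℝ (Fin d) → ℂ) :
    Set (EuclideanSpace ℝ (Fin d) × EuclideanSpace ℝ (Fin d)) :=
  {z | z.2 ≠ 0 ∧ ∀ φ : EuclideanSpace ℝ (Fin d) → ℂ, IsSCutoff s φ → φ z.1 ≠ 0 →
    ∀ Γ : Set (EuclideanSpace ℝ (Fin d)), IsOpen Γ → IsCone Γ → z.2 ∈ Γ →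
      FLSemi ω q (fun x => φ x * f x) Γ = ∞}

/-- The `s`-wave-front set `WF_s f`. -/
def WFs (s : ℝ) (f : EuclideanSpace ℝ (Fin d) → ℂ) :
    Set (EuclideanSpace ℝ (Fin d) × EuclideanSpace ℝ (Fin d)) :=
  {z | z.2 ≠ 0 ∧ ¬ ∃ φ : EuclideanSpace ℝ (Fin d) → ℂ, IsSCutoff s φ ∧
    (∃ U : Set (EuclideanSpace ℝ (Fin d)), IsOpen U ∧ z.1 ∈ U ∧ ∀ x ∈ U, φ x = 1) ∧
    ∃ Γ : Set (EuclideanSpace ℝ (Fin d)), IsOpen Γ ∧ IsCone Γ ∧ z.2 ∈ Γ ∧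
      ∃ C k : ℝ, 0 < C ∧ 0 < k ∧
        ∀ ξ ∈ Γ, ‖FT (fun x => φ x * f x) ξ‖ ≤ C * Real.exp (-k * ‖ξ‖ ^ (1 / s))}

/-- The mixed modulation-space seminorm
`( ∫_Γ ( ∫ |V_g F(x,ξ)|^p dx )^{q/p} ω(ξ)^q dξ )^{1/q}` with the usual
ess-sup interpretations for `p = ∞` or `q = ∞`. -/
def ModSemi (g F : EuclideanSpace ℝ (Fin d) → ℂ) (ω : EuclideanSpace ℝ (Fin d) → ℝ)
    (p q : ℝ≥0∞) (Γ : Set (EuclideanSpace ℝ (Fin d))) : ℝ≥0∞ :=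
  if q = ∞ then
    essSup (fun ξ => eLpNorm (fun x => STFT g F x ξ) p volume * ENNReal.ofReal (ω ξ))
      (volume.restrict Γ)
  else
    (∫⁻ ξ in Γ, (eLpNorm (fun x => STFT g F x ξ) p volume * ENNReal.ofReal (ω ξ)) ^ q.toReal) ^
      (1 / q.toReal)

/-- The modulation wave-front set `WF_{M^{p,q}_ω} f`, with window `g`. -/
def WF_M (s : ℝ) (p q : ℝ≥0∞) (ω : EuclideanSpace ℝ (Fin d) → ℝ)
    (g f : EuclideanSpace ℝ (Fin d) → ℂ) :
    Set (EuclideanSpace ℝ (Fin d) × EuclideanSpace ℝ (Fin d)) :=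
  {z | z.2 ≠ 0 ∧ ∀ φ : EuclideanSpace ℝ (Fin d) → ℂ, IsSCutoff s φ → φ z.1 ≠ 0 →
    ∀ Γ : Set (EuclideanSpace ℝ (Fin d)), IsOpen Γ → IsCone Γ → z.2 ∈ Γ →
      ModSemi g (fun x => φ x * f x) ω p q Γ = ∞}

/-- Reinterpret a plain vector as a point of Euclidean space. -/
def toE (x : Fin d → ℝ) : EuclideanSpace ℝ (Fin d) :=
  (EuclideanSpace.equiv (Fin d) ℝ).symm x

/-- The point `A k` of the lattice `A(ℤ^d)`. -/
def latPt (A : Matrix (Fin d) (Fin d) ℝ) (k : Fin d → ℤ) : EuclideanSpace ℝ (Fin d) :=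
  toE (A.mulVec fun i => (k i : ℝ))

/-- The point `c (Aᵀ)⁻¹ k` of the dual lattice `c (Aᵀ)⁻¹(ℤ^d)`. -/
def dualLatPt (A : Matrix (Fin d) (Fin d) ℝ) (c : ℝ) (k : Fin d → ℤ) :
    EuclideanSpace ℝ (Fin d) :=
  toE (c • (A.transpose⁻¹.mulVec fun i => (k i : ℝ)))

/-- The parallelepiped `x₁ + A([0,1]^d)`. -/
def lattPara (A : Matrix (Fin d) (Fin d) ℝ) (x₁ : EuclideanSpace ℝ (Fin d)) :
    Set (EuclideanSpace ℝ (Fin d)) :=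
  (fun t : Fin d → ℝ => x₁ + toE (A.mulVec t)) '' (Set.univ.pi fun _ => Set.Icc 0 1)

/-- The adjoint short-time Fourier transform `V*_φ F`. -/
def VStar (φ : EuclideanSpace ℝ (Fin d) → ℂ)
    (F : EuclideanSpace ℝ (Fin d) × EuclideanSpace ℝ (Fin d) → ℂ)
    (t : EuclideanSpace ℝ (Fin d)) : ℂ :=
  ((2 * Real.pi) ^ (-(d : ℝ) / 2) : ℝ) *
    ∫ z : EuclideanSpace ℝ (Fin d) × EuclideanSpace ℝ (Fin d),
      F z * Complex.exp ((⟪z.2, t⟫ : ℝ) * Complex.I) * φ (t - z.1)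

theorem integrable_E (s : ℝ) (hs : 1 < s) :
    Integrable (fun x : EuclideanSpace ℝ (Fin d) => Real.exp (-‖x‖ ^ (1 / s))) := by
  have hs0 : 0 < s := by linarith
  obtain ⟨n, hn⟩ := exists_nat_gt (s * d)
  have hr : (Module.finrank ℝ (EuclideanSpace ℝ (Fin d)) : ℝ) < n / s := by
    rw [finrank_euclideanSpace_fin, lt_div_iff₀ hs0]; linarith
  have h := (integrable_one_add_norm (μ := (volume : Measure (EuclideanSpace ℝ (Fin d)))) hr).const_mul
    (Real.exp 1 * n.factorial)
  refine h.mono' ?_ ?_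
  · exact Measurable.aestronglyMeasurable (by fun_prop)
  refine Filter.Eventually.of_forall fun x => ?_
  have ht : 0 ≤ ‖x‖ := norm_nonneg x
  generalize ‖x‖ = t at ht
  rw [Real.norm_eq_abs, abs_of_pos (Real.exp_pos _)]
  have hy : (1 + t) ^ (1 / s) ≤ 1 + t ^ (1 / s) := by
    have := Real.rpow_add_le_add_rpow (p := 1 / s) zero_le_one ht (by positivity)
      (by rw [div_le_one hs0]; exact hs.le)
    simpa using this
  have hy0 : 0 ≤ (1 + t) ^ (1 / s) := by positivity
  have h2 := Real.pow_div_factorial_le_exp _ hy0 n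
  have h3 : ((1 + t) ^ (1 / s)) ^ n = (1 + t) ^ (n / s) := by
    rw [← Real.rpow_natCast, ← Real.rpow_mul (by positivity)]; congr 1; ring
  rw [h3, div_le_iff₀ (by positivity)] at h2
  rw [Real.rpow_neg (by positivity), ← div_eq_mul_inv, le_div_iff₀ (by positivity)]
  have h4 : Real.exp ((1 + t) ^ (1 / s)) ≤ Real.exp 1 * Real.exp (t ^ (1 / s)) := by
    rw [← Real.exp_add]; exact Real.exp_le_exp.2 hy
  calc Real.exp (-t ^ (1 / s)) * (1 + t) ^ (n / s)
      ≤ Real.exp (-t ^ (1 / s)) * (Real.exp 1 * Real.exp (t ^ (1 / s)) * n.factorial) := by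
        gcongr; exact h2.trans (by gcongr)
    _ = Real.exp 1 * n.factorial := by
        rw [Real.exp_neg]; field_simp

theorem FT_eq (f : EuclideanSpace ℝ (Fin d) → ℂ) (ξ : EuclideanSpace ℝ (Fin d)) :
    FT f ξ = ((2 * Real.pi) ^ (-(d : ℝ) / 2) : ℝ) *
      FourierTransform.fourier f ((2 * Real.pi)⁻¹ • ξ) := by
  rw [FT, Real.fourier_eq']
  congr 1
  refine integral_congr_ae (Filter.Eventually.of_forall fun x => ?_)
  simp only [smul_eq_mul]
  rw [mul_comm, inner_smul_right]
  congr 3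
  have := Real.pi_ne_zero
  push_cast
  field_simp

theorem FT_continuous {f : EuclideanSpace ℝ (Fin d) → ℂ} (hf : Integrable f) :
    Continuous (FT f) := by
  have h : Continuous (FourierTransform.fourier f : EuclideanSpace ℝ (Fin d) → ℂ) :=
    VectorFourier.fourierIntegral_continuous Real.continuous_fourierChar
      (by exact continuous_inner) hf
  have : FT f = fun ξ => (((2 * Real.pi) ^ (-(d : ℝ) / 2) : ℝ) : ℂ) *
      FourierTransform.fourier f ((2 * Real.pi)⁻¹ • ξ) := funext (FT_eq f)
  rw [this]
  fun_prop

theorem FT_bound (f : EuclideanSpace ℝ (Fin d) → ℂ) (ξ : EuclideanSpace ℝ (Fin d)) :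
    ‖FT f ξ‖ ≤ (2 * Real.pi) ^ (-(d : ℝ) / 2) * ∫ x, ‖f x‖ := by
  rw [FT, norm_mul, Complex.norm_real, Real.norm_eq_abs, abs_of_nonneg (by positivity)]
  gcongr
  refine (norm_integral_le_integral_norm _).trans (le_of_eq ?_)
  congr 1; ext x
  rw [norm_mul, ← Complex.ofReal_neg, Complex.norm_exp_ofReal_mul_I, mul_one]

theorem FT_mul_le {φ g : EuclideanSpace ℝ (Fin d) → ℂ} (hφc : Continuous φ) (hφ : Integrable φ)
    (hφ' : Integrable (FT φ)) (hg : Integrable g) :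
    ∃ K : ℝ, 0 < K ∧ ∀ ξ, ‖FT (fun x => φ x * g x) ξ‖ ≤ K * ∫ ζ, ‖FT φ ζ‖ * ‖FT g (ξ - ζ)‖ := by
  have hpi := Real.pi_pos
  set c : ℝ := (2 * Real.pi) ^ (-(d : ℝ) / 2) with hc
  have hc0 : 0 < c := by positivity
  have hcC : (c : ℂ) ≠ 0 := by exact_mod_cast hc0.ne'
  have hF : ∀ (h : EuclideanSpace ℝ (Fin d) → ℂ) v,
      FourierTransform.fourier h v = (c : ℂ)⁻¹ * FT h ((2 * Real.pi) • v) := by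
    intro h v
    rw [FT_eq, smul_smul, inv_mul_cancel₀ (by positivity), one_smul, ← hc]
    field_simp
  have hFi : Integrable (FourierTransform.fourier φ : EuclideanSpace ℝ (Fin d) → ℂ) := by
    rw [show (FourierTransform.fourier φ : EuclideanSpace ℝ (Fin d) → ℂ) = _ from funext (hF φ)]
    exact (hφ'.comp_smul (by positivity)).const_mul _
  have hinv := hφc.fourierInv_fourier_eq hφ hFi
  rw [Real.fourierInv_eq_fourier_comp_neg] at hinv
  refine ⟨c⁻¹ * |((2 * Real.pi) ^ Module.finrank ℝ (EuclideanSpace ℝ (Fin d)))⁻¹|, by positivity,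
    fun ξ => ?_⟩
  set gξ : EuclideanSpace ℝ (Fin d) → ℂ :=
    fun x => g x * Complex.exp (-(⟪x, ξ⟫ : ℝ) * Complex.I) with hgξ
  have hgξi : Integrable gξ := by
    refine hg.mul_bdd (c := 1) (Continuous.aestronglyMeasurable (by fun_prop)) ?_
    refine Filter.Eventually.of_forall fun x => ?_
    rw [← Complex.ofReal_neg, Complex.norm_exp_ofReal_mul_I]
  have hshift : ∀ η, FT gξ η = FT g (ξ + η) := by
    intro η
    simp only [FT, hgξ]
    congr 1
    refine integral_congr_ae (Filter.Eventually.of_forall fun x => ?_)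
    simp only
    rw [mul_assoc, ← Complex.exp_add, inner_add_right]
    congr 2; push_cast; ring
  have key := VectorFourier.integral_fourierIntegral_smul_eq_flip (μ := volume) (ν := volume)
    (L := innerₗ (EuclideanSpace ℝ (Fin d))) Real.continuous_fourierChar
    (by exact continuous_inner) hFi.comp_neg hgξi
  rw [flip_innerₗ] at key
  change ∫ x, (FourierTransform.fourier (fun x => FourierTransform.fourier φ (-x))
    : EuclideanSpace ℝ (Fin d) → ℂ) x • gξ x = ∫ x, FourierTransform.fourier φ (-x) • 
      (FourierTransform.fourier gξ : EuclideanSpace ℝ (Fin d) → ℂ) x at key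
  rw [hinv] at key
  have e1 : FT (fun x => φ x * g x) ξ = c * ∫ x, φ x • gξ x := by
    simp only [FT, hgξ, smul_eq_mul, mul_assoc, ← hc]
  rw [e1, key, norm_mul, Complex.norm_real, Real.norm_eq_abs, abs_of_pos hc0]
  have e2 := integral_neg_eq_self (fun x : EuclideanSpace ℝ (Fin d) =>
    ‖FourierTransform.fourier φ (-x) • (FourierTransform.fourier gξ : EuclideanSpace ℝ (Fin d) → ℂ) x‖) volume
  have e3 := Measure.integral_comp_smul (volume : Measure (EuclideanSpace ℝ (Fin d)))
    (fun ζ => ‖FT φ ζ‖ * ‖FT g (ξ - ζ)‖) (2 * Real.pi)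
  rw [smul_eq_mul] at e3
  rw [mul_assoc, ← e3]
  calc _ ≤ c * ∫ x, ‖FourierTransform.fourier φ (-x) • (FourierTransform.fourier gξ : EuclideanSpace ℝ (Fin d) → ℂ) x‖ := by
        gcongr; exact norm_integral_le_integral_norm _
    _ = _ := by
        rw [← e2, ← integral_const_mul, ← integral_const_mul]
        congr 1; ext x
        rw [hF, hF, hshift, smul_eq_mul, neg_neg, smul_neg, ← sub_eq_add_neg]
        simp only [norm_mul, norm_inv, Complex.norm_real, Real.norm_eq_abs, abs_of_pos hc0]
        field_simp

theorem cone_lemma {Γ : Set (EuclideanSpace ℝ (Fin d))} (ho : IsOpen Γ) (hΓ : IsCone Γ)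
    {ξ₀ : EuclideanSpace ℝ (Fin d)} (h0 : ξ₀ ∈ Γ) :
    ∃ Γ' : Set (EuclideanSpace ℝ (Fin d)), IsOpen Γ' ∧ IsCone Γ' ∧ ξ₀ ∈ Γ' ∧
      ∃ c : ℝ, 0 < c ∧ ∀ ξ ∈ Γ', ∀ η ∉ Γ, c * ‖ξ‖ ≤ ‖ξ - η‖ := by
  obtain ⟨ε, hε, hb⟩ := Metric.isOpen_iff.1 ho ξ₀ h0
  refine ⟨{ξ | ∃ t : ℝ, 0 < t ∧ t • ξ ∈ Metric.ball ξ₀ (ε / 2)}, ?_, ⟨?_, ?_⟩, ?_, ?_⟩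
  · have : {ξ | ∃ t : ℝ, 0 < t ∧ t • ξ ∈ Metric.ball ξ₀ (ε / 2)} =
        ⋃ t : ℝ, ⋃ _ : 0 < t, (fun ξ => t • ξ) ⁻¹' Metric.ball ξ₀ (ε / 2) := by
      ext; simp
    rw [this]
    exact isOpen_iUnion fun t => isOpen_iUnion fun _ =>
      Metric.isOpen_ball.preimage (continuous_const_smul t)
  · rintro ⟨t, ht, h⟩
    rw [smul_zero] at h
    exact hΓ.1 (hb (Metric.ball_subset_ball (by linarith) h))
  · rintro ξ ⟨t, ht, h⟩ u hu
    refine ⟨t / u, by positivity, ?_⟩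
    rwa [smul_smul, div_mul_cancel₀ _ hu.ne']
  · exact ⟨1, one_pos, by simpa using hε⟩
  · refine ⟨(ε / 2) / (‖ξ₀‖ + ε / 2), by positivity, ?_⟩
    rintro ξ ⟨t, ht, h⟩ η hη
    have h1 : t • η ∉ Metric.ball ξ₀ ε := fun h => hη (by
      have := hΓ.2 _ (hb h) t⁻¹ (by positivity)
      rwa [smul_smul, inv_mul_cancel₀ ht.ne', one_smul] at this)
    rw [Metric.mem_ball, dist_eq_norm] at h h1
    have h2 : ‖t • η - ξ₀‖ ≤ ‖t • ξ - t • η‖ + ‖t • ξ - ξ₀‖ := by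
      rw [norm_sub_rev (t • ξ)]
      exact norm_sub_le_norm_sub_add_norm_sub _ _ _
    have h3 : ‖t • ξ‖ ≤ ‖t • ξ - ξ₀‖ + ‖ξ₀‖ := by
      simpa using norm_add_le (t • ξ - ξ₀) ξ₀
    rw [← smul_sub, norm_smul, Real.norm_eq_abs, abs_of_pos ht] at h2
    rw [norm_smul, Real.norm_eq_abs, abs_of_pos ht] at h3
    rw [div_mul_eq_mul_div, div_le_iff₀ (by positivity)]
    have h4 : t * ‖ξ‖ ≤ ‖ξ₀‖ + ε / 2 := by linarith
    have h5 : ε / 2 ≤ t * ‖ξ - η‖ := by linarith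
    have : t * (ε / 2 * ‖ξ‖) ≤ t * (‖ξ - η‖ * (‖ξ₀‖ + ε / 2)) := by
      calc t * (ε / 2 * ‖ξ‖) = ε / 2 * (t * ‖ξ‖) := by ring
        _ ≤ (t * ‖ξ - η‖) * (‖ξ₀‖ + ε / 2) := by gcongr
        _ = _ := by ring
    exact le_of_mul_le_mul_left this ht

theorem interp {α : Type*} [MeasurableSpace α] {μ : Measure α} {w : α → ℝ≥0∞} {r q : ℝ≥0∞}
    (hr : 1 ≤ r) (hrq : r ≤ q) {M : ℝ≥0∞} (hM : M ≠ ∞) (hwM : ∀ x, w x ≤ M)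
    (hw : eLpNorm w r μ < ∞) : eLpNorm w q μ < ∞ := by
  have hr0 : r ≠ 0 := (zero_lt_one.trans_le hr).ne'
  have hq0 : q ≠ 0 := (zero_lt_one.trans_le (hr.trans hrq)).ne'
  by_cases hq : q = ∞
  · subst hq
    rw [eLpNorm_exponent_top]
    exact (essSup_le_of_ae_le M (Filter.Eventually.of_forall fun x => by simpa using hwM x)).trans_lt
      hM.lt_top
  have hrt : r ≠ ∞ := fun h => hq (top_le_iff.1 (h ▸ hrq))
  rw [eLpNorm_lt_top_iff_lintegral_rpow_enorm_lt_top hr0 hrt] at hw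
  rw [eLpNorm_lt_top_iff_lintegral_rpow_enorm_lt_top hq0 hq]
  have hle : r.toReal ≤ q.toReal := ENNReal.toReal_mono hq hrq
  have hrp : 0 < r.toReal := ENNReal.toReal_pos hr0 hrt
  calc ∫⁻ x, ‖w x‖ₑ ^ q.toReal ∂μ ≤ ∫⁻ x, M ^ (q.toReal - r.toReal) * ‖w x‖ₑ ^ r.toReal ∂μ := by
        gcongr with x
        have : q.toReal = (q.toReal - r.toReal) + r.toReal := by ring
        conv_lhs => rw [this, ENNReal.rpow_add_of_nonneg _ _ (by linarith) hrp.le]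
        refine mul_le_mul_left (ENNReal.rpow_le_rpow ?_ (by linarith)) _
        simpa using hwM x
    _ = M ^ (q.toReal - r.toReal) * ∫⁻ x, ‖w x‖ₑ ^ r.toReal ∂μ := by
        rw [lintegral_const_mul']
        exact ENNReal.rpow_ne_top_of_nonneg (by linarith) hM
    _ < ∞ := ENNReal.mul_lt_top (ENNReal.rpow_lt_top_of_nonneg (by linarith) hM) hw

theorem young {h u : EuclideanSpace ℝ (Fin d) → ℝ≥0∞} (hh : Measurable h) (hu : Measurable u)
    {r q : ℝ≥0∞} (hr : 1 ≤ r) (hrq : r ≤ q) (h1 : ∀ x, h x ≤ 1) (hi : ∫⁻ x, h x < ∞)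
    (hur : eLpNorm u r volume < ∞) :
    eLpNorm (fun ξ => ∫⁻ ζ, h ζ * u (ξ - ζ)) q volume < ∞ := by
  have hr0 : r ≠ 0 := (zero_lt_one.trans_le hr).ne'
  by_cases hrt : r = ∞
  · subst hrt
    obtain rfl := top_le_iff.1 hrq
    set M := eLpNorm u ∞ volume with hM
    have hae : ∀ᵐ x, u x ≤ M := by
      have := ae_le_eLpNormEssSup (f := u) (μ := volume)
      simpa [hM] using this
    refine lt_of_le_of_lt ?_ (ENNReal.mul_lt_top hi hur)
    rw [eLpNorm_exponent_top]
    refine essSup_le_of_ae_le _ (Filter.Eventually.of_forall fun ξ => ?_)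
    simp only [enorm_eq_self]
    rw [← lintegral_mul_const' _ _ hur.ne]
    refine lintegral_mono_ae ?_
    have hq : Measure.QuasiMeasurePreserving (fun ζ : EuclideanSpace ℝ (Fin d) => ξ - ζ) volume volume :=
      (Measure.measurePreserving_sub_left volume ξ).quasiMeasurePreserving
    filter_upwards [hq.ae hae] with ζ hζ
    gcongr
  have hrr : 1 ≤ r.toReal := by
    rw [← ENNReal.toReal_one]; exact ENNReal.toReal_mono hrt hr
  have hrp : 0 < r.toReal := by linarith
  have hint := (eLpNorm_lt_top_iff_lintegral_rpow_enorm_lt_top hr0 hrt).1 hur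
  simp only [enorm_eq_self] at hint
  set A := ∫⁻ x, h x with hA
  set p := r.toReal with hp
  have hmeas : Measurable fun z : EuclideanSpace ℝ (Fin d) × EuclideanSpace ℝ (Fin d) =>
      h z.2 * u (z.1 - z.2) ^ p := by fun_prop
  have key : ∀ ξ, (∫⁻ ζ, h ζ * u (ξ - ζ)) ^ p ≤ A ^ (p - 1) * ∫⁻ ζ, h ζ * u (ξ - ζ) ^ p := by
    intro ξ
    have hol := ENNReal.lintegral_mul_norm_pow_le (μ := (volume : Measure (EuclideanSpace ℝ (Fin d))))
      (f := h) (g := fun ζ => h ζ * u (ξ - ζ) ^ p) hh.aemeasurable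
      (by fun_prop) (p := 1 - 1 / p) (q := 1 / p) (by
        rw [sub_nonneg, div_le_one hrp]; exact hrr) (by positivity) (by ring)
    have e : ∀ ζ, h ζ ^ (1 - 1 / p) * (h ζ * u (ξ - ζ) ^ p) ^ (1 / p) = h ζ * u (ξ - ζ) := by
      intro ζ
      rw [ENNReal.mul_rpow_of_nonneg _ _ (by positivity), ← ENNReal.rpow_mul,
        mul_one_div_cancel hrp.ne', ENNReal.rpow_one, ← mul_assoc,
        ← ENNReal.rpow_add_of_nonneg _ _ (by rw [sub_nonneg, div_le_one hrp]; exact hrr)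
          (by positivity)]
      simp
    simp only [e] at hol
    calc _ ≤ (A ^ (1 - 1 / p) * (∫⁻ ζ, h ζ * u (ξ - ζ) ^ p) ^ (1 / p)) ^ p := by gcongr
      _ = _ := by
        rw [ENNReal.mul_rpow_of_nonneg _ _ hrp.le, ← ENNReal.rpow_mul, ← ENNReal.rpow_mul,
          one_div_mul_cancel hrp.ne', ENNReal.rpow_one]
        congr 2
        field_simp
  have hApt : A ^ (p - 1) < ∞ := ENNReal.rpow_lt_top_of_nonneg (by linarith) hi.ne
  set B := ∫⁻ x, u x ^ p with hB
  refine interp hr hrq (M := (A ^ (p - 1) * B) ^ (1 / p)) ?_ ?_ ?_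
  · exact ENNReal.rpow_ne_top_of_nonneg (by positivity) (ENNReal.mul_lt_top hApt hint).ne
  · intro ξ
    rw [one_div, ENNReal.le_rpow_inv_iff hrp]
    refine (key ξ).trans ?_
    gcongr
    calc ∫⁻ ζ, h ζ * u (ξ - ζ) ^ p ≤ ∫⁻ ζ, u (ξ - ζ) ^ p := by
          gcongr with ζ
          exact mul_le_of_le_one_left' (h1 ζ)
      _ = B := lintegral_sub_left_eq_self (fun x => u x ^ p) ξ
  · rw [eLpNorm_lt_top_iff_lintegral_rpow_enorm_lt_top hr0 hrt]
    simp only [enorm_eq_self, ← hp]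
    calc ∫⁻ ξ, (∫⁻ ζ, h ζ * u (ξ - ζ)) ^ p ≤ ∫⁻ ξ, A ^ (p - 1) * ∫⁻ ζ, h ζ * u (ξ - ζ) ^ p := by
          gcongr with ξ; exact key ξ
      _ = A ^ (p - 1) * ∫⁻ ξ, ∫⁻ ζ, h ζ * u (ξ - ζ) ^ p := by
          rw [lintegral_const_mul' _ _ hApt.ne]
      _ = A ^ (p - 1) * ∫⁻ ζ, ∫⁻ ξ, h ζ * u (ξ - ζ) ^ p := by
          rw [lintegral_lintegral_swap]
          exact hmeas.aemeasurable
      _ = A ^ (p - 1) * ∫⁻ ζ, h ζ * B := by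
          congr 2; ext ζ
          rw [lintegral_const_mul' _ _ ((h1 ζ).trans_lt ENNReal.one_lt_top).ne,
            lintegral_sub_right_eq_self (fun x => u x ^ p) ζ]
      _ = A ^ (p - 1) * (A * B) := by rw [lintegral_mul_const' _ _ hint.ne]
      _ < ∞ := ENNReal.mul_lt_top hApt (ENNReal.mul_lt_top hi hint)

theorem stmt3 {d : ℕ} (s : ℝ) (hs : 1 < s) (r q : ℝ≥0∞) (hr : 1 ≤ r) (hrq : r ≤ q)
    (ω θ : EuclideanSpace ℝ (Fin d) → ℝ) (hω : IsSAdmissible s ω) (hθ : IsSAdmissible s θ)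
    (C : ℝ) (hC : 0 < C) (hωθ : ∀ ξ, ω ξ ≤ C * θ ξ)
    (f : EuclideanSpace ℝ (Fin d) → ℂ) (hf : Integrable f) (hfc : HasCompactSupport f)
    (φ : EuclideanSpace ℝ (Fin d) → ℂ) (hφ : IsSCutoff s φ) :
    WF_FL s q ω (fun x => φ x * f x) ⊆ WF_FL s r θ f := by
  rintro ⟨x₀, ξ₀⟩ ⟨hz, H⟩
  refine ⟨hz, fun ψ hψ hψ0 Γ ho hcone hm => ?_⟩
  by_contra hfin
  have hs0 : 0 < s := by linarith
  obtain ⟨Γ', ho', hcone', hm', c, hc0, hcd⟩ := cone_lemma ho hcone hm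
  refine absurd (H ψ hψ hψ0 Γ' ho' hcone' hm') (ne_of_lt ?_)
  obtain ⟨hθm, hθp, v, -, hvp, -, -, C₀, k₀, C₁, hC₀, hk₀, hC₁, hv, hmod⟩ := hθ
  obtain ⟨hφs, hφcs, hφd⟩ := hφ
  -- the localized function
  set g : EuclideanSpace ℝ (Fin d) → ℂ := fun x => ψ x * f x with hg
  have hgi : Integrable g := by
    obtain ⟨M, hM⟩ := hψ.2.1.exists_bound_of_continuous hψ.1.continuous
    exact hf.bdd_mul hψ.1.continuous.aestronglyMeasurable (Filter.Eventually.of_forall hM)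
  have hφi : Integrable φ := hφs.continuous.integrable_of_hasCompactSupport hφcs
  have hE := integrable_E (d := d) s hs
  set E : EuclideanSpace ℝ (Fin d) → ℝ := fun x => Real.exp (-‖x‖ ^ (1 / s)) with hEdef
  have hEp : ∀ x, 0 < E x := fun x => Real.exp_pos _
  have hE1 : ∀ x, E x ≤ 1 := fun x => Real.exp_le_one_iff.2 (by
    have : 0 ≤ ‖x‖ ^ (1 / s) := by positivity
    linarith)
  have hFφ : Integrable (FT φ) := by
    obtain ⟨C', -, hC'⟩ := hφd 1 one_pos
    refine (hE.const_mul C').mono' (FT_continuous hφi).aestronglyMeasurable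
      (Filter.Eventually.of_forall fun x => ?_)
    simpa [hEdef] using hC' x
  obtain ⟨K, hK, hKle⟩ := FT_mul_le hφs.continuous hφi hFφ hgi
  have hc' : 0 < c ^ (1 / s) := by positivity
  obtain ⟨CN, hCN, hN⟩ := hφd (1 + k₀ + (k₀ + 1) / c ^ (1 / s)) (by positivity)
  set N : ℝ := 1 + k₀ + (k₀ + 1) / c ^ (1 / s) with hNdef
  set B : ℝ := (2 * Real.pi) ^ (-(d : ℝ) / 2) * ∫ x, ‖g x‖ with hB
  have hB0 : 0 ≤ B := (norm_nonneg _).trans (FT_bound g 0)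
  set U : EuclideanSpace ℝ (Fin d) → ℝ := Γ.indicator fun η => ‖FT g η‖ * θ η with hU
  have hUm : Measurable U :=
    ((FT_continuous hgi).norm.measurable.mul hθm).indicator ho.measurableSet
  have hU0 : ∀ x, 0 ≤ U x := fun x =>
    Set.indicator_nonneg (fun η _ => mul_nonneg (norm_nonneg _) (hθp η).le) x
  set D : ℝ := C * K * C₁ * C₀ * CN * (1 + θ 0 * B) with hD
  have hθ0 := hθp 0
  have hD0 : 0 < D := by positivity
  -- pointwise estimate
  have hpt : ∀ ξ ∈ Γ', ∀ ζ, C * K * θ ξ * (‖FT φ ζ‖ * ‖FT g (ξ - ζ)‖) ≤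
      D * (E ζ * U (ξ - ζ) + E ζ * E ξ) := by
    intro ξ hξ ζ
    have ht0 : 0 ≤ ‖ζ‖ ^ (1 / s) := by positivity
    have hτ0 : 0 ≤ ‖ξ‖ ^ (1 / s) := by positivity
    have hθξ := hθp ξ
    have hD1 : C * K * C₁ * C₀ * CN ≤ D := by
      rw [hD]; exact le_mul_of_one_le_right (by positivity) (by nlinarith)
    have hD2 : C * K * C₁ * C₀ * CN * (θ 0 * B) ≤ D := by
      rw [hD]; gcongr; linarith
    by_cases hin : ξ - ζ ∈ Γ
    · have hUe : U (ξ - ζ) = ‖FT g (ξ - ζ)‖ * θ (ξ - ζ) := by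
        rw [hU, Set.indicator_of_mem hin]
      have h1 : θ ξ ≤ C₁ * (C₀ * Real.exp (k₀ * ‖ζ‖ ^ (1 / s))) * θ (ξ - ζ) := by
        have h := hmod ζ (ξ - ζ)
        rw [add_sub_cancel] at h
        refine h.trans ?_
        have := (hθp (ξ - ζ)).le
        gcongr
        exact hv ζ
      have h2 : Real.exp (k₀ * ‖ζ‖ ^ (1 / s)) * Real.exp (-N * ‖ζ‖ ^ (1 / s)) ≤ E ζ := by
        rw [← Real.exp_add]
        refine Real.exp_le_exp.2 ?_
        have : 0 ≤ (k₀ + 1) / c ^ (1 / s) * ‖ζ‖ ^ (1 / s) := by positivity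
        rw [hNdef]; nlinarith
      have hUn := hU0 (ξ - ζ)
      have hEz := hEp ζ
      have hEx := hEp ξ
      have hθz := hθp (ξ - ζ)
      calc C * K * θ ξ * (‖FT φ ζ‖ * ‖FT g (ξ - ζ)‖)
          ≤ C * K * (C₁ * (C₀ * Real.exp (k₀ * ‖ζ‖ ^ (1 / s))) * θ (ξ - ζ)) *
            ((CN * Real.exp (-N * ‖ζ‖ ^ (1 / s))) * ‖FT g (ξ - ζ)‖) := by
            gcongr
            exact hN ζ
        _ = C * K * C₁ * C₀ * CN * ((Real.exp (k₀ * ‖ζ‖ ^ (1 / s)) *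
              Real.exp (-N * ‖ζ‖ ^ (1 / s))) * U (ξ - ζ)) := by rw [hUe]; ring
        _ ≤ D * (E ζ * U (ξ - ζ)) := by gcongr
        _ ≤ _ := by
            gcongr
            have : 0 ≤ E ζ * E ξ := by positivity
            linarith
    · have hd := hcd ξ hξ _ hin
      rw [sub_sub_cancel] at hd
      have hd' : c ^ (1 / s) * ‖ξ‖ ^ (1 / s) ≤ ‖ζ‖ ^ (1 / s) := by
        rw [← Real.mul_rpow hc0.le (norm_nonneg _)]
        exact Real.rpow_le_rpow (by positivity) hd (by positivity)
      have h1 : θ ξ ≤ C₁ * (C₀ * Real.exp (k₀ * ‖ξ‖ ^ (1 / s))) * θ 0 := by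
        have h := hmod ξ 0
        rw [add_zero] at h
        refine h.trans ?_
        gcongr
        exact hv ξ
      have h2 : Real.exp (k₀ * ‖ξ‖ ^ (1 / s)) * Real.exp (-N * ‖ζ‖ ^ (1 / s)) ≤ E ζ * E ξ := by
        rw [hEdef, ← Real.exp_add, ← Real.exp_add]
        refine Real.exp_le_exp.2 ?_
        have : (k₀ + 1) * ‖ξ‖ ^ (1 / s) ≤ (k₀ + 1) / c ^ (1 / s) * ‖ζ‖ ^ (1 / s) := by
          rw [div_mul_eq_mul_div, le_div_iff₀ hc']
          nlinarith
        rw [hNdef]; nlinarith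
      have hUn := hU0 (ξ - ζ)
      have hEz := hEp ζ
      have hEx := hEp ξ
      calc C * K * θ ξ * (‖FT φ ζ‖ * ‖FT g (ξ - ζ)‖)
          ≤ C * K * (C₁ * (C₀ * Real.exp (k₀ * ‖ξ‖ ^ (1 / s))) * θ 0) *
            ((CN * Real.exp (-N * ‖ζ‖ ^ (1 / s))) * B) := by
            gcongr
            · exact hN ζ
            · exact FT_bound g _
        _ = C * K * C₁ * C₀ * CN * (θ 0 * B) * (Real.exp (k₀ * ‖ξ‖ ^ (1 / s)) *
              Real.exp (-N * ‖ζ‖ ^ (1 / s))) := by ring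
        _ ≤ D * (E ζ * E ξ) := by gcongr
        _ ≤ _ := by
            gcongr
            have : 0 ≤ E ζ * U (ξ - ζ) := by positivity
            linarith
  -- pass to extended nonnegative functions
  set h : EuclideanSpace ℝ (Fin d) → ℝ≥0∞ := fun x => ENNReal.ofReal (E x) with hh
  set u : EuclideanSpace ℝ (Fin d) → ℝ≥0∞ := fun x => ENNReal.ofReal (U x) with hu
  have hhm : Measurable h := by
    refine ENNReal.measurable_ofReal.comp ?_
    rw [hEdef]; fun_prop
  have hum : Measurable u := ENNReal.measurable_ofReal.comp hUm
  have hh1 : ∀ x, h x ≤ 1 := fun x => ENNReal.ofReal_le_one.2 (hE1 x)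
  have hhi : ∫⁻ x, h x < ∞ := hE.lintegral_lt_top
  set A := ∫⁻ x, h x with hA
  have hur : eLpNorm u r volume < ∞ := by
    have e : eLpNorm u r volume = eLpNorm U r volume :=
      eLpNorm_congr_enorm_ae (Filter.Eventually.of_forall fun x => by
        simp [hu, Real.enorm_eq_ofReal (hU0 x)])
    rw [e, hU, eLpNorm_indicator_eq_eLpNorm_restrict ho.measurableSet]
    exact lt_top_iff_ne_top.2 hfin
  have hY := young hhm hum hr hrq hh1 hhi hur
  have hhq : eLpNorm h q volume < ∞ := by
    refine interp le_rfl (hr.trans hrq) ENNReal.one_ne_top hh1 ?_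
    rw [eLpNorm_one_eq_lintegral_enorm]
    simpa using hhi
  set Y : EuclideanSpace ℝ (Fin d) → ℝ≥0∞ := fun ξ => ∫⁻ ζ, h ζ * u (ξ - ζ) with hYdef
  have hYm : Measurable Y := by
    refine Measurable.lintegral_prod_right' (f := fun z : EuclideanSpace ℝ (Fin d) × EuclideanSpace ℝ (Fin d) => h z.2 * u (z.1 - z.2)) ?_
    fun_prop
  have hsum : eLpNorm (Y + h) q volume < ∞ :=
    (eLpNorm_add_le hYm.aestronglyMeasurable hhm.aestronglyMeasurable (hr.trans hrq)).trans_lt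
      (ENNReal.add_lt_top.2 ⟨hY, hhq⟩)
  have hDA : ENNReal.ofReal D * (1 + A) ≠ ∞ :=
    ENNReal.mul_ne_top ENNReal.ofReal_ne_top (ENNReal.add_ne_top.2 ⟨ENNReal.one_ne_top, hhi.ne⟩)
  have hcomm : (fun x => ψ x * (φ x * f x)) = fun x => φ x * g x := by
    ext x; simp only [hg]; ring
  have hbound : ∀ ξ ∈ Γ', ‖‖FT (fun x => ψ x * (φ x * f x)) ξ‖ * ω ξ‖ₑ ≤
      ((ENNReal.ofReal D * (1 + A)).toNNReal : ℝ≥0∞) * ‖(Y + h) ξ‖ₑ := by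
    intro ξ hξ
    rw [ENNReal.coe_toNNReal hDA, enorm_eq_self, hcomm]
    have hω0 := hω.2.1 ξ
    rw [Real.enorm_eq_ofReal (by positivity)]
    have hθξ := hθp ξ
    have s1 : ‖FT (fun x => φ x * g x) ξ‖ * ω ξ ≤
        ∫ ζ, C * K * θ ξ * (‖FT φ ζ‖ * ‖FT g (ξ - ζ)‖) := by
      rw [integral_const_mul]
      calc _ ≤ (K * ∫ ζ, ‖FT φ ζ‖ * ‖FT g (ξ - ζ)‖) * (C * θ ξ) := by
            have hle := hKle ξ
            exact mul_le_mul hle (hωθ ξ) hω0.le ((norm_nonneg _).trans hle)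
        _ = _ := by ring
    calc ENNReal.ofReal (‖FT (fun x => φ x * g x) ξ‖ * ω ξ)
        ≤ ENNReal.ofReal (∫ ζ, C * K * θ ξ * (‖FT φ ζ‖ * ‖FT g (ξ - ζ)‖)) :=
          ENNReal.ofReal_le_ofReal s1
      _ ≤ ‖∫ ζ, C * K * θ ξ * (‖FT φ ζ‖ * ‖FT g (ξ - ζ)‖)‖ₑ := Real.ofReal_le_enorm _
      _ ≤ ∫⁻ ζ, ‖C * K * θ ξ * (‖FT φ ζ‖ * ‖FT g (ξ - ζ)‖)‖ₑ := enorm_integral_le_lintegral_enorm _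
      _ ≤ ∫⁻ ζ, ENNReal.ofReal D * (h ζ * u (ξ - ζ) + h ζ * h ξ) := by
          refine lintegral_mono fun ζ => ?_
          rw [Real.enorm_eq_ofReal (by positivity)]
          refine (ENNReal.ofReal_le_ofReal (hpt ξ hξ ζ)).trans (le_of_eq ?_)
          rw [ENNReal.ofReal_mul hD0.le, ENNReal.ofReal_add
            (mul_nonneg (hEp _).le (hU0 _)) (mul_nonneg (hEp _).le (hEp _).le),
            ENNReal.ofReal_mul (hEp _).le, ENNReal.ofReal_mul (hEp _).le]
      _ = ENNReal.ofReal D * (Y ξ + A * h ξ) := by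
          rw [lintegral_const_mul' _ _ ENNReal.ofReal_ne_top, lintegral_add_right _ (by fun_prop),
            lintegral_mul_const' _ _ ENNReal.ofReal_ne_top]
      _ ≤ ENNReal.ofReal D * ((1 + A) * (Y ξ + h ξ)) := by
          refine mul_le_mul_right ?_ _
          rw [mul_add]
          refine add_le_add ?_ ?_
          · exact le_mul_of_one_le_left' le_self_add
          · exact mul_le_mul_left le_add_self _
      _ = _ := by rw [mul_assoc]; rfl
  have hfinal := eLpNorm_le_nnreal_smul_eLpNorm_of_ae_le_mul' (μ := volume.restrict Γ')
    (f := fun ξ => ‖FT (fun x => ψ x * (φ x * f x)) ξ‖ * ω ξ) (g := Y + h)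
    ((ae_restrict_iff' ho'.measurableSet).2 (Filter.Eventually.of_forall hbound)) q
  refine lt_of_le_of_lt hfinal ?_
  refine ENNReal.mul_lt_top ENNReal.coe_lt_top ?_
  exact (eLpNorm_mono_measure _ Measure.restrict_le_self).trans_lt hsum

end Paper
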